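/- Let λ=(λ_1,...,λ_l) be a partition, (w_l,...,w_1) = (λ_1,...,λ_l)+(l−1,...,1,0) the corresponding strictly decreasing sequence (so w_i = λ_{l+1−i}+i−1), and 0 ≤ k ≤ l. Then ∂_1^{N_{λ,k}} s_λ(t), evaluated at t = [x_1]+⋯+[x_k], equals c'_{λ,k} · s_{(λ_1,...,λ_k)}([x_1]+⋯+[x_k]), where c'_{λ,k} = (N_{λ,k}! / Π_{i=1}^{l−k} w_i!) · Π_{1≤i<j≤l−k}(w_j−w_i). -/

import Mathlib

open MvPolynomial

/-- The polynomial `p_n(t)` defined by `exp(Σ_{n≥1} t_n k^n) = Σ_{n≥0} p_n(t) k^n`,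
as a polynomial in the variables `t_1, t_2, ...` (variable `X n` stands for `t_n`). -/
noncomputable def pS (n : ℕ) : MvPolynomial ℕ ℚ :=
  ∑ m ∈ Finset.range (n + 1), (Nat.factorial m : ℚ)⁻¹ •
    ∑ c ∈ Finset.univ.filter
        (fun c : Fin m → Fin (n + 1) =>
          (∑ j, ((c j : ℕ))) = n ∧ ∀ j, 1 ≤ (c j : ℕ)),
      ∏ j, X ((c j : ℕ))

/-- `p_n` for `n : ℤ`, with `p_n = 0` for `n < 0`. -/
noncomputable def pz (n : ℤ) : MvPolynomial ℕ ℚ :=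
  if 0 ≤ n then pS n.toNat else 0

/-- The Schur function `s_λ(t) = det(p_{λ_i - i + j})_{1 ≤ i,j ≤ l}` (here `0`-indexed). -/
noncomputable def schur {l : ℕ} (lam : Fin l → ℕ) : MvPolynomial ℕ ℚ :=
  Matrix.det (Matrix.of fun a b : Fin l =>
    pz ((lam a : ℤ) - ((a : ℕ) : ℤ) + ((b : ℕ) : ℤ)))

/-- Substitution `t_n ↦ (x_1^n + ⋯ + x_k^n)/n`, i.e. `t = [x_1] + ⋯ + [x_k]`. -/
noncomputable def toPowerSums (k : ℕ) (f : MvPolynomial ℕ ℚ) : MvPolynomial (Fin k) ℚ :=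
  aeval (fun n : ℕ => (n : ℚ)⁻¹ • ∑ i : Fin k, X i ^ n) f

/-- Iterated partial derivative `∂_{i_1} ⋯ ∂_{i_r}` for a list `L = [i_1, ..., i_r]`. -/
noncomputable def derivs (L : List ℕ) (f : MvPolynomial ℕ ℚ) : MvPolynomial ℕ ℚ :=
  L.foldr (fun i g => pderiv i g) f

/-- The entries of a partition `λ` padded by zeros (`0`-indexed). -/
def pad {l : ℕ} (lam : Fin l → ℕ) (a : ℕ) : ℕ := if h : a < l then lam ⟨a, h⟩ else 0

section PowerSeriesAux

open PowerSeries in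
/-- The coefficient of a power of a series, as a sum over bounded compositions. -/
theorem coeff_pow_eq_sum_fin {S : Type*} [CommRing S] (F : PowerSeries S) (m n : ℕ) :
    coeff n (F ^ m) = ∑ c ∈ Finset.univ.filter
      (fun c : Fin m → Fin (n + 1) => (∑ j, ((c j : ℕ))) = n), ∏ j, coeff (c j : ℕ) F := by
  have h : F ^ m = ∏ _j : Fin m, F := by simp
  rw [h, coeff_prod]
  symm
  refine Finset.sum_bij' (fun c _ => Finsupp.equivFunOnFinite.symm (fun j => (c j : ℕ)))
    (fun f _ j => Fin.ofNat (n + 1) (f j)) ?_ ?_ ?_ ?_ ?_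
  · intro c hc
    simpa using hc
  · intro f hf
    simp only [Finset.mem_finsuppAntidiag] at hf
    have hb : ∀ j, f j < n + 1 := fun j => by
      have := Finset.single_le_sum (f := f) (fun i _ => Nat.zero_le _) (Finset.mem_univ j)
      rw [hf.1] at this
      omega
    simp [Nat.mod_eq_of_lt (hb _), hf.1]
  · intro c hc
    ext j
    simp
  · intro f hf
    simp only [Finset.mem_finsuppAntidiag] at hf
    ext j
    have := Finset.single_le_sum (f := f) (fun i _ => Nat.zero_le _) (Finset.mem_univ j)
    rw [hf.1] at this
    simp [Nat.mod_eq_of_lt (show f j < n + 1 by omega)]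
  · intro c hc
    simp

open PowerSeries in
/-- A series satisfying a first-order linear differential equation is determined by its
constant coefficient. -/
theorem PowerSeries.eq_of_derivative_eq_mul {S : Type*} [CommRing S] [IsAddTorsionFree S]
    {a F G : PowerSeries S} (hF : d⁄dX S F = a * F) (hG : d⁄dX S G = a * G)
    (h0 : constantCoeff F = constantCoeff G) : F = G := by
  ext n
  induction n using Nat.strong_induction_on with
  | _ n ih =>
    cases n with
    | zero => simpa using h0
    | succ n =>
      have h1 := congrArg (coeff n) hF
      have h2 := congrArg (coeff n) hG
      have h3 : coeff n (a * F) = coeff n (a * G) := by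
        rw [coeff_mul, coeff_mul]
        refine Finset.sum_congr rfl fun p hp => ?_
        rw [ih p.2 (by have := Finset.HasAntidiagonal.mem_antidiagonal.1 hp; omega)]
      rw [coeff_derivative] at h1 h2
      have h4 : (n + 1) • coeff (n + 1) F = (n + 1) • coeff (n + 1) G := by
        simp only [nsmul_eq_mul, Nat.cast_add, Nat.cast_one]
        linear_combination h1 - h2 + h3
      exact nsmul_right_injective (Nat.succ_ne_zero n) h4

open PowerSeries in
theorem mk_aeval_pS_eq_exp_subst {S : Type*} [CommRing S] [Algebra ℚ S] (t : ℕ → S) :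
    (PowerSeries.mk fun n => MvPolynomial.aeval t (pS n)) =
      (exp S).subst (PowerSeries.mk fun n => if n = 0 then 0 else t n) := by
  set T : PowerSeries S := PowerSeries.mk fun n => if n = 0 then 0 else t n with hT
  have hT0 : constantCoeff T = 0 := by simp [hT, ← coeff_zero_eq_constantCoeff_apply]
  ext n
  rw [coeff_subst' (HasSubst.of_constantCoeff_zero' hT0),
    finsum_eq_sum_of_support_subset (s := Finset.range (n + 1))]
  · rw [coeff_mk, pS, map_sum]
    refine Finset.sum_congr rfl fun m _ => ?_
    rw [map_smul, map_sum, coeff_pow_eq_sum_fin, coeff_exp, algebraMap_smul, one_div]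
    congr 1
    rw [← Finset.filter_filter, Finset.sum_filter]
    refine Finset.sum_congr rfl fun c _ => ?_
    split_ifs with h
    · rw [map_prod]
      refine Finset.prod_congr rfl fun j _ => ?_
      have := h j
      rw [MvPolynomial.aeval_X, hT, coeff_mk, if_neg (by omega)]
    · push Not at h
      obtain ⟨j, hj⟩ := h
      symm
      refine Finset.prod_eq_zero (Finset.mem_univ j) ?_
      rw [hT, coeff_mk, if_pos (by omega)]
  · intro m hm
    simp only [Finset.coe_range, Set.mem_Iio]
    by_contra hlt
    refine hm ?_
    simp only
    rw [coeff_of_lt_order (φ := T ^ m), smul_zero]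
    refine lt_of_lt_of_le ?_ (le_order_pow_of_constantCoeff_eq_zero m hT0)
    exact_mod_cast (by omega : n < m)

open PowerSeries in
theorem derivative_mk_aeval_pS {S : Type*} [CommRing S] [Algebra ℚ S] (t : ℕ → S) :
    d⁄dX S (PowerSeries.mk fun n => MvPolynomial.aeval t (pS n)) =
      (PowerSeries.mk fun n => ((n : S) + 1) * t (n + 1)) *
        (PowerSeries.mk fun n => MvPolynomial.aeval t (pS n)) := by
  have hT0 : constantCoeff (PowerSeries.mk fun n => if n = 0 then 0 else t n) = 0 := by
    simp [← coeff_zero_eq_constantCoeff_apply]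
  rw [mk_aeval_pS_eq_exp_subst, derivative_subst (HasSubst.of_constantCoeff_zero' hT0),
    derivative_exp, mul_comm]
  congr 1
  ext n
  simp [coeff_derivative, mul_comm]

end PowerSeriesAux

section Columns

open PowerSeries in
theorem derivative_prod_one_sub {S ι : Type*} [CommRing S] (x : ι → S) (s : Finset ι) :
    d⁄dX S (∏ i ∈ s, (1 - PowerSeries.C (x i) * PowerSeries.X)) =
      -(∑ i ∈ s, PowerSeries.mk fun n => x i ^ (n + 1)) * ∏ i ∈ s, (1 - PowerSeries.C (x i) * PowerSeries.X) := by
  classical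
  induction s using Finset.induction_on with
  | empty => simp
  | insert i s hi ih =>
    have h : (PowerSeries.mk fun n => x i ^ (n + 1)) * (1 - PowerSeries.C (x i) * PowerSeries.X) = PowerSeries.C (x i) := by
      ext n
      cases n with
      | zero => simp [mul_sub, ← mul_assoc]
      | succ n =>
        rw [mul_sub, mul_one, ← mul_assoc, map_sub, coeff_succ_mul_X, coeff_mul_C, coeff_mk,
          coeff_mk, PowerSeries.coeff_C, if_neg (Nat.succ_ne_zero n)]
        ring
    rw [Finset.prod_insert hi, Finset.sum_insert hi, Derivation.leibniz, ih]
    simp only [smul_eq_mul, map_sub, derivative_one, Derivation.leibniz, derivative_X,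
      derivative_C]
    linear_combination (∏ i ∈ s, (1 - PowerSeries.C (x i) * PowerSeries.X)) * h

open PowerSeries in
theorem prod_one_sub_mul_mk_aeval_pS {S ι : Type*} [CommRing S] [Algebra ℚ S]
    [IsAddTorsionFree S] [Fintype ι] (x : ι → S) (u : S) :
    (∏ i, (1 - PowerSeries.C (x i) * PowerSeries.X)) * (PowerSeries.mk fun n => MvPolynomial.aeval
      (fun n : ℕ => ((n : ℚ)⁻¹ • ∑ i, x i ^ n) + if n = 1 then u else 0) (pS n)) =
      rescale u (exp S) := by
  refine PowerSeries.eq_of_derivative_eq_mul (a := PowerSeries.C u) ?_ ?_ ?_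
  · rw [Derivation.leibniz, derivative_mk_aeval_pS, derivative_prod_one_sub]
    have h : (PowerSeries.mk fun n : ℕ => ((n : S) + 1) *
        ((((n + 1 : ℕ) : ℚ)⁻¹ • ∑ i, x i ^ (n + 1)) + if n + 1 = 1 then u else 0)) =
        (∑ i, PowerSeries.mk fun n => x i ^ (n + 1)) + PowerSeries.C u := by
      ext n
      have h1 : ((n : S) + 1) * algebraMap ℚ S (((n + 1 : ℕ) : ℚ)⁻¹) = 1 := by
        have : ((n : S) + 1) = algebraMap ℚ S ((n + 1 : ℕ) : ℚ) := by simp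
        rw [this, ← map_mul, mul_inv_cancel₀ (by positivity), map_one]
      rw [coeff_mk, map_add, map_sum, Algebra.smul_def, PowerSeries.coeff_C]
      simp only [coeff_mk, Nat.add_eq_right]
      rw [mul_add, ← mul_assoc, h1]
      split_ifs with hn <;> simp [hn]
    rw [h]
    simp only [smul_eq_mul]
    ring
  · ext n
    rw [coeff_derivative, coeff_rescale, PowerSeries.coeff_C_mul, coeff_rescale, pow_succ]
    have := congrArg (coeff n) (derivative_exp S)
    rw [coeff_derivative] at this
    rw [← this]
    ring
  · have h0 : constantCoeff (rescale u (exp S)) = 1 := by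
      rw [← coeff_zero_eq_constantCoeff_apply, coeff_rescale]
      simp
    rw [map_mul, map_prod, h0, ← coeff_zero_eq_constantCoeff_apply (PowerSeries.mk _), coeff_mk]
    simp [pS]

/-- The divided power `u ^ z / z!`, extended by zero to negative `z`. -/
noncomputable def dividedPow {S : Type*} [CommRing S] [Algebra ℚ S] (u : S) (z : ℤ) : S :=
  algebraMap ℚ S (if 0 ≤ z then ((z.toNat.factorial : ℚ))⁻¹ else 0) * u ^ z.toNat

open Polynomial in
theorem sum_coeff_mul_aeval_pz {S ι : Type*} [CommRing S] [Algebra ℚ S]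
    [IsAddTorsionFree S] [Fintype ι] (x : ι → S) (u : S) (b : ℕ) (hb : Fintype.card ι ≤ b)
    (n : ℤ) :
    ∑ j ∈ Finset.range (b + 1), MvPolynomial.aeval
      (fun n : ℕ => ((n : ℚ)⁻¹ • ∑ i, x i ^ n) + if n = 1 then u else 0) (pz (n + (b - j : ℕ))) *
        (∏ i, (1 - Polynomial.C (x i) * Polynomial.X : S[X])).coeff j = dividedPow u (n + b) := by
  set t := (fun n : ℕ => ((n : ℚ)⁻¹ • ∑ i, x i ^ n) + if n = 1 then u else 0) with ht
  set E : S[X] := ∏ i, (1 - Polynomial.C (x i) * Polynomial.X : S[X]) with hE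
  have hdeg : E.natDegree ≤ b := by
    refine (natDegree_prod_le _ _).trans (le_trans ?_ hb)
    refine (Finset.sum_le_card_nsmul _ _ 1 fun i _ => ?_).trans (by simp)
    compute_degree
  rcases lt_or_ge (n + b) 0 with hneg | hpos
  · rw [dividedPow, if_neg (by omega), map_zero, zero_mul]
    refine Finset.sum_eq_zero fun j hj => ?_
    rw [pz, if_neg (by omega), map_zero, zero_mul]
  · obtain ⟨N, hN⟩ := Int.eq_ofNat_of_zero_le hpos
    have key := congrArg (PowerSeries.coeff N) (prod_one_sub_mul_mk_aeval_pS x u)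
    have hcoe : (∏ i, (1 - PowerSeries.C (x i) * PowerSeries.X)) = (E : PowerSeries S) := by
      rw [hE, ← Polynomial.coeToPowerSeries.ringHom_apply, map_prod]
      simp
    rw [hcoe, PowerSeries.coeff_rescale, PowerSeries.coeff_exp, PowerSeries.coeff_mul,
      Finset.Nat.sum_antidiagonal_eq_sum_range_succ_mk] at key
    simp only [Polynomial.coeff_coe, PowerSeries.coeff_mk] at key
    rw [dividedPow, if_pos hpos, hN, Int.toNat_natCast, ← one_div, mul_comm, ← key]
    have h1 : ∑ j ∈ Finset.range (b + 1), MvPolynomial.aeval t (pz (n + (b - j : ℕ))) * E.coeff j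
        = ∑ j ∈ Finset.range (b + 1 + N), MvPolynomial.aeval t (pz (N - j)) * E.coeff j := by
      refine Finset.sum_congr_of_eq_on_inter ?_ ?_ ?_
      · intro j h1 h2; simp at h1 h2; omega
      · intro j h1 h2
        simp only [Finset.mem_range] at h1 h2
        rw [coeff_eq_zero_of_natDegree_lt (by omega), mul_zero]
      · intro j h1 h2
        simp only [Finset.mem_range] at h1 h2
        congr 3
        omega
    have h2 : ∑ j ∈ Finset.range (N + 1), E.coeff j * MvPolynomial.aeval t (pS (N - j))
        = ∑ j ∈ Finset.range (b + 1 + N), MvPolynomial.aeval t (pz (N - j)) * E.coeff j := by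
      refine Finset.sum_congr_of_eq_on_inter ?_ ?_ ?_
      · intro j h1 h2; simp at h1 h2; omega
      · intro j h1 h2
        simp only [Finset.mem_range] at h1 h2
        rw [pz, if_neg (by omega), map_zero, zero_mul]
      · intro j h1 h2
        simp only [Finset.mem_range] at h1 h2
        rw [pz, if_pos (by omega), mul_comm]
        congr 3
        omega
    rw [h1, ← h2]

open Polynomial in
/-- Column operations replace the columns of index at least the number of variables by
divided powers. -/
theorem det_aeval_pz_eq {S ι : Type*} [CommRing S] [Algebra ℚ S]
    [IsAddTorsionFree S] [Fintype ι] (x : ι → S) (u : S) {l : ℕ} (μ : Fin l → ℤ)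
    (t : ℕ → S)
    (ht : t = fun n : ℕ => ((n : ℚ)⁻¹ • ∑ i, x i ^ n) + if n = 1 then u else 0) :
    (Matrix.of fun a b : Fin l => MvPolynomial.aeval t (pz (μ a + (b : ℕ)))).det =
      (Matrix.of fun a b : Fin l => if Fintype.card ι ≤ (b : ℕ) then dividedPow u (μ a + (b : ℕ))
        else MvPolynomial.aeval t (pz (μ a + (b : ℕ)))).det := by
  set E : S[X] := ∏ i, (1 - Polynomial.C (x i) * Polynomial.X : S[X]) with hE
  have hE0 : E.coeff 0 = 1 := by simp [hE, coeff_zero_prod]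
  let U : Matrix (Fin l) (Fin l) S := Matrix.of fun b' b =>
    if Fintype.card ι ≤ (b : ℕ) then (if (b' : ℕ) ≤ b then E.coeff (b - b') else 0)
    else if b' = b then 1 else 0
  have hU : U.det = 1 := by
    rw [Matrix.det_of_isUpperTriangular]
    · refine Finset.prod_eq_one fun b _ => ?_
      simp [U, hE0]
    · intro b' b h
      have h' : b < b' := h
      simp only [U, Matrix.of_apply]
      have h'' : ¬ (b' : ℕ) ≤ b := by simpa using h'
      rw [if_neg h'', if_neg h'.ne', ite_self]
  rw [← mul_one (Matrix.det _), ← hU, ← Matrix.det_mul]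
  congr 1
  ext a b
  rw [Matrix.mul_apply]
  simp only [Matrix.of_apply, U]
  split_ifs with hb
  · rw [← sum_coeff_mul_aeval_pz x u b hb (μ a), ← ht,
      Fin.sum_univ_eq_sum_range (fun b' => MvPolynomial.aeval t (pz (μ a + (b' : ℕ))) *
        if b' ≤ (b : ℕ) then E.coeff (b - b') else 0) l,
      ← Finset.sum_subset (Finset.range_subset_range.2 (show (b : ℕ) + 1 ≤ l from b.2)),
      ← Finset.sum_range_reflect]
    · refine Finset.sum_congr rfl fun j hj => ?_
      simp only [Finset.mem_range] at hj
      rw [if_pos (by omega)]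
      congr 3
      omega
    · intro j h1 h2
      simp only [Finset.mem_range] at h1 h2
      rw [if_neg (by omega), mul_zero]
  · simp

end Columns

section Coefficients

open Polynomial in
/-- If some columns of a polynomial matrix consist of monomials whose exponents are governed by
`μ a + β b`, then the lowest relevant coefficient of the determinant is a block determinant. -/
theorem coeff_det_of_monomial_columns {R ι : Type*} [CommRing R] [Fintype ι] [DecidableEq ι]
    (s : Finset ι) (μ β : ι → ℤ) (θ : ℤ) (h1 : ∀ a ∉ s, θ < μ a) (h2 : ∀ a ∈ s, μ a ≤ θ)
    (M : Matrix ι ι R[X]) (d : ℤ → R) (hd : ∀ z < 0, d z = 0)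
    (hM : ∀ a, ∀ b ∈ s, M a b = Polynomial.C (d (μ a + β b)) * Polynomial.X ^ (μ a + β b).toNat)
    (N : ℕ) (hN : (N : ℤ) = ∑ b ∈ s, (μ b + β b)) :
    M.det.coeff N = (Matrix.of fun a b => if b ∈ s then (if a ∈ s then d (μ a + β b) else 0)
      else if a ∈ s then 0 else (M a b).coeff 0).det := by
  rw [Matrix.det_apply, Matrix.det_apply, finsetSum_coeff]
  refine Finset.sum_congr rfl fun σ _ => ?_
  rw [Polynomial.coeff_smul]
  congr 1
  simp only [Matrix.of_apply]
  have hprod : ∏ b, M (σ b) b = Polynomial.C (∏ b ∈ s, d (μ (σ b) + β b)) *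
      ((∏ b ∈ sᶜ, M (σ b) b) * Polynomial.X ^ (∑ b ∈ s, (μ (σ b) + β b).toNat)) := by
    rw [← Finset.prod_mul_prod_compl s, Finset.prod_congr rfl fun b hb => hM (σ b) b hb,
      Finset.prod_mul_distrib, Finset.prod_pow_eq_pow_sum, map_prod]
    ring
  rw [hprod, Polynomial.coeff_C_mul, coeff_mul_X_pow']
  by_cases hz : ∃ b ∈ s, d (μ (σ b) + β b) = 0
  · obtain ⟨b, hb, hb0⟩ := hz
    rw [Finset.prod_eq_zero hb hb0, zero_mul, Finset.prod_eq_zero (Finset.mem_univ b)]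
    rw [if_pos hb, hb0, ite_self]
  · push Not at hz
    have hsum : ((∑ b ∈ s, (μ (σ b) + β b).toNat : ℕ) : ℤ) = ∑ b ∈ s, (μ (σ b) + β b) := by
      rw [Nat.cast_sum]
      refine Finset.sum_congr rfl fun b hb => Int.toNat_of_nonneg ?_
      by_contra hlt
      exact hz b hb (hd _ (by omega))
    by_cases hσ : ∀ b, b ∈ s ↔ σ b ∈ s
    · have hs : ∑ b ∈ s, μ (σ b) = ∑ b ∈ s, μ b := Finset.sum_equiv σ hσ fun _ _ => rfl
      have hNs : ∑ b ∈ s, (μ (σ b) + β b).toNat = N := by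
        zify
        push_cast at hsum
        rw [hsum, hN, Finset.sum_add_distrib, Finset.sum_add_distrib, hs]
      rw [hNs, if_pos le_rfl, Nat.sub_self, coeff_zero_prod, ← Finset.prod_mul_prod_compl s]
      congr 1
      · refine Finset.prod_congr rfl fun b hb => ?_
        rw [if_pos hb, if_pos ((hσ b).1 hb)]
      · refine Finset.prod_congr rfl fun b hb => ?_
        rw [Finset.mem_compl] at hb
        rw [if_neg hb, if_neg (mt (hσ b).2 hb)]
    · push Not at hσ
      obtain ⟨b₀, hb₀⟩ := hσ
      have hlt : ∑ b ∈ s, (2 * μ b - 2 * θ - 1) < ∑ b ∈ s, (2 * μ (σ b) - 2 * θ - 1) := by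
        have hl : ∑ b ∈ s, (2 * μ b - 2 * θ - 1) =
            ∑ b, if σ b ∈ s then 2 * μ (σ b) - 2 * θ - 1 else 0 := by
          rw [Equiv.sum_comp σ fun b => if b ∈ s then 2 * μ b - 2 * θ - 1 else 0]
          simp
        have hr : ∑ b ∈ s, (2 * μ (σ b) - 2 * θ - 1) =
            ∑ b, if b ∈ s then 2 * μ (σ b) - 2 * θ - 1 else 0 := by
          simp
        rw [hl, hr]
        refine Finset.sum_lt_sum (fun b _ => ?_) ⟨b₀, Finset.mem_univ _, ?_⟩
        · have := h1 (σ b)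
          have := h2 (σ b)
          split_ifs <;> grind
        · have := h1 (σ b₀)
          have := h2 (σ b₀)
          split_ifs <;> grind
      have hNlt : N < ∑ b ∈ s, (μ (σ b) + β b).toNat := by
        zify
        push_cast at hsum
        rw [hsum, hN, Finset.sum_add_distrib, Finset.sum_add_distrib]
        simp only [Finset.sum_sub_distrib, ← Finset.mul_sum] at hlt
        linarith
      rw [if_neg (by omega), mul_zero]
      symm
      refine Finset.prod_eq_zero (Finset.mem_univ b₀) ?_
      rcases hb₀ with ⟨h3, h4⟩ | ⟨h3, h4⟩ <;> simp [h3, h4]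

theorem derivative_aeval_add_X {R : Type*} [CommRing R] [Algebra ℚ R] (τ : ℕ → R)
    (f : MvPolynomial ℕ ℚ) :
    Polynomial.derivative (aeval (fun n => Polynomial.C (τ n) +
      if n = 1 then Polynomial.X else 0) f) =
      aeval (fun n => Polynomial.C (τ n) + if n = 1 then Polynomial.X else 0) (pderiv 1 f) := by
  induction f using MvPolynomial.induction_on with
  | C q =>
    rw [pderiv_C, map_zero, aeval_C, IsScalarTower.algebraMap_apply ℚ R (Polynomial R)]
    exact Polynomial.derivative_C
  | add p q hp hq => simp only [map_add, hp, hq]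
  | mul_X p n hp =>
    rw [map_mul, Polynomial.derivative_mul, hp, Derivation.leibniz, aeval_X, pderiv_X]
    by_cases hn : n = 1
    · subst hn
      simp
      ring
    · simp [hn]
      ring

/-- Taylor expansion in the variable `t_1`. -/
theorem factorial_mul_coeff_aeval_add_X {R : Type*} [CommRing R] [Algebra ℚ R] (τ : ℕ → R)
    (N : ℕ) (f : MvPolynomial ℕ ℚ) :
    N.factorial * (aeval (fun n => Polynomial.C (τ n) +
      if n = 1 then Polynomial.X else 0) f).coeff N =
      aeval τ (derivs (List.replicate N 1) f) := by
  have h0 : ∀ g : MvPolynomial ℕ ℚ, (aeval (fun n => Polynomial.C (τ n) +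
      if n = 1 then Polynomial.X else 0) g).coeff 0 = aeval τ g := by
    intro g
    induction g using MvPolynomial.induction_on with
    | C q =>
      rw [aeval_C, aeval_C, IsScalarTower.algebraMap_apply ℚ R (Polynomial R)]
      exact Polynomial.coeff_C_zero
    | add p q hp hq => simp only [map_add, Polynomial.coeff_add, hp, hq]
    | mul_X p n hp =>
      rw [map_mul, Polynomial.mul_coeff_zero, hp, map_mul, aeval_X, aeval_X]
      split_ifs <;> simp
  have hN : ∀ N, Polynomial.derivative^[N] (aeval (fun n => Polynomial.C (τ n) +
      if n = 1 then Polynomial.X else 0) f) = aeval (fun n => Polynomial.C (τ n) +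
      if n = 1 then Polynomial.X else 0) (derivs (List.replicate N 1) f) := by
    intro N
    induction N with
    | zero => simp [derivs]
    | succ N ih =>
      rw [Function.iterate_succ_apply', ih, derivative_aeval_add_X]
      simp [derivs, List.replicate_succ]
  rw [← h0, ← hN, Polynomial.coeff_iterate_derivative, zero_add, Nat.descFactorial_self,
    nsmul_eq_mul]

end Coefficients

/-- The determinant of reciprocal factorials `1 / (v_i - j)!`. -/
theorem det_inv_factorial {m : ℕ} (v : Fin m → ℕ) :
    (Matrix.of fun i j : Fin m => if (j : ℕ) ≤ v i then ((v i - j).factorial : ℚ)⁻¹ else 0).det =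
      (∏ i, ((v i).factorial : ℚ)⁻¹) * ∏ j, ∏ i ∈ Finset.Iio j, ((v j : ℚ) - v i) := by
  have h : (Matrix.of fun i j : Fin m =>
      if (j : ℕ) ≤ v i then ((v i - j).factorial : ℚ)⁻¹ else 0) =
      Matrix.of fun i j => ((v i).factorial : ℚ)⁻¹ *
        (Matrix.of fun i j : Fin m => (descPochhammer ℚ j).eval (v i : ℚ)) i j := by
    ext i j
    simp only [Matrix.of_apply, descPochhammer_eval_eq_descFactorial]
    split_ifs with hj
    · rw [← Nat.factorial_mul_descFactorial hj]
      push_cast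
      have : ((v i).descFactorial j : ℚ) ≠ 0 := by
        rw [Nat.cast_ne_zero, Ne, Nat.descFactorial_eq_zero_iff_lt]
        omega
      field_simp
    · rw [Nat.descFactorial_eq_zero_iff_lt.2 (by omega)]
      simp
  rw [h, Matrix.det_mul_column, ← Matrix.det_eval_matrixOfPolynomials_eq_det_vandermonde
    (fun i => (v i : ℚ)) (fun j => descPochhammer ℚ j) (fun j => descPochhammer_natDegree ℚ j)
    (fun j => monic_descPochhammer ℚ j), Matrix.det_vandermonde]
  congr 1
  refine Finset.prod_comm' ?_
  simp

theorem pad_rev {k m : ℕ} (lam : Fin (k + m) → ℕ) (i : Fin m) :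
    pad lam (k + m - 1 - i) = lam (Fin.natAdd k i.rev) := by
  have := i.2
  rw [pad, dif_pos (by omega)]
  congr 1
  ext
  simp only [Fin.val_natAdd, Fin.val_rev]
  omega

/-- Let `λ = (λ_1,...,λ_l)` be a partition,
`(w_l, ..., w_1) = (λ_1,...,λ_l) + (l-1,...,1,0)` (so `w_{i+1} = λ_{l-i} + i`, 0-indexed `i`,
i.e. `w_{i+1} = pad lam (l-1-i) + i`), and `0 ≤ k ≤ l`. Then
`∂_1^{N_{λ,k}} s_λ` evaluated at `t = [x_1]+⋯+[x_k]` equals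
`c'_{λ,k} · s_{(λ_1,...,λ_k)}([x_1]+⋯+[x_k])`, where
`c'_{λ,k} = (N_{λ,k}! / Π_{i=1}^{l-k} w_i!) · Π_{1≤i<j≤l-k} (w_j - w_i)`. -/
theorem statement10 (l : ℕ) (lam : Fin l → ℕ) (hanti : Antitone lam)
    (k : ℕ) (hk : k ≤ l)
    (N : ℕ) (hN : N = ∑ a ∈ Finset.Ico k l, pad lam a)
    (c : ℚ)
    (hc : c = (Nat.factorial N : ℚ)
          / (∏ i ∈ Finset.range (l - k), (Nat.factorial (pad lam (l - 1 - i) + i) : ℚ))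
        * ∏ j ∈ Finset.range (l - k), ∏ i ∈ Finset.range j,
            (((pad lam (l - 1 - j) + j : ℕ) : ℚ) - ((pad lam (l - 1 - i) + i : ℕ) : ℚ))) :
    toPowerSums k (derivs (List.replicate N 1) (schur lam))
      = c • toPowerSums k (schur (fun a : Fin k => pad lam a)) := by
  obtain ⟨m, rfl⟩ := Nat.exists_eq_add_of_le hk
  set R := MvPolynomial (Fin k) ℚ
  set τ : ℕ → R := fun n => (n : ℚ)⁻¹ • ∑ i : Fin k, X i ^ n with hτ
  set t : ℕ → Polynomial R := fun n => Polynomial.C (τ n) +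
    if n = 1 then Polynomial.X else 0 with ht
  set v : Fin m → ℕ := fun i => lam (Fin.natAdd k i.rev) + i with hv
  have htail : ∏ j ∈ Finset.range m, ∏ i ∈ Finset.range j,
      (((pad lam (k + m - 1 - j) + j : ℕ) : ℚ) - ((pad lam (k + m - 1 - i) + i : ℕ) : ℚ)) =
      ∏ j : Fin m, ∏ i ∈ Finset.Iio j, ((v j : ℚ) - v i) := by
    rw [← Fin.prod_univ_eq_prod_range (fun j => ∏ i ∈ Finset.range j,
      (((pad lam (k + m - 1 - j) + j : ℕ) : ℚ) - ((pad lam (k + m - 1 - i) + i : ℕ) : ℚ))) m]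
    refine Finset.prod_congr rfl fun j _ => ?_
    symm
    refine Finset.prod_bij (fun i _ => (i : ℕ)) (by simp) (by simp [Fin.ext_iff]) ?_ ?_
    · intro i hi
      have hij : i < (j : ℕ) := by simpa using hi
      exact ⟨⟨i, hij.trans j.2⟩, by simpa [Fin.lt_def] using hij, rfl⟩
    · intro i _
      rw [pad_rev, pad_rev]
  have hfac : ∏ i ∈ Finset.range m, ((pad lam (k + m - 1 - i) + i).factorial : ℚ) =
      ∏ i : Fin m, ((v i).factorial : ℚ) := by
    rw [← Fin.prod_univ_eq_prod_range
      (fun i => ((pad lam (k + m - 1 - i) + i).factorial : ℚ)) m]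
    refine Finset.prod_congr rfl fun i _ => ?_
    rw [pad_rev]
  have hNsum : N = ∑ a : Fin m, lam (Fin.natAdd k a) := by
    rw [hN, Finset.sum_Ico_eq_sum_range, Nat.add_sub_cancel_left,
      ← Fin.sum_univ_eq_sum_range (fun a => pad lam (k + a)) m]
    refine Finset.sum_congr rfl fun a _ => ?_
    rw [pad, dif_pos (by omega)]
    rfl
  -- Taylor expansion and column operations
  have hTaylor : ∀ f, toPowerSums k f = aeval τ f := fun f => rfl
  rw [hTaylor, hTaylor, ← factorial_mul_coeff_aeval_add_X]
  have hdet : aeval t (schur lam) = (Matrix.of fun a b : Fin (k + m) =>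
      if k ≤ (b : ℕ) then dividedPow Polynomial.X ((lam a : ℤ) - (a : ℕ) + (b : ℕ))
        else aeval t (pz ((lam a : ℤ) - (a : ℕ) + (b : ℕ)))).det := by
    have := det_aeval_pz_eq (fun i : Fin k => Polynomial.C (X i : R)) Polynomial.X
      (fun a : Fin (k + m) => (lam a : ℤ) - (a : ℕ)) t (by
        funext n
        simp only [ht, hτ, ← Polynomial.smul_C, map_sum, map_pow])
    rw [Fintype.card_fin] at this
    rw [← this, schur, AlgHom.map_det]
    rfl
  set d : ℤ → R := fun z => MvPolynomial.C (if 0 ≤ z then ((z.toNat.factorial : ℚ))⁻¹ else 0)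
    with hd
  set s : Finset (Fin (k + m)) := Finset.univ.filter fun b => k ≤ (b : ℕ) with hs
  have hcoeff : (aeval t (schur lam)).coeff N = (Matrix.of fun a b : Fin (k + m) =>
      if b ∈ s then (if a ∈ s then d ((lam a : ℤ) - (a : ℕ) + (b : ℕ)) else 0)
      else if a ∈ s then 0 else aeval τ (pz ((lam a : ℤ) - (a : ℕ) + (b : ℕ)))).det := by
    rw [hdet, coeff_det_of_monomial_columns s (fun a => (lam a : ℤ) - (a : ℕ))
      (fun b => ((b : ℕ) : ℤ)) ((if h : k < k + m then (lam ⟨k, h⟩ : ℤ) else 0) - k) ?_ ?_ _ d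
      (fun z hz => by rw [hd]; simp [hz.not_ge]) ?_ N ?_]
    · congr 1
      ext1 a b
      simp only [Matrix.of_apply]
      split_ifs with h1 h2 h3 h4 <;> try rfl
      · simp [hs] at h1; omega
      · have := factorial_mul_coeff_aeval_add_X τ 0 (pz ((lam a : ℤ) - (a : ℕ) + (b : ℕ)))
        rw [Nat.factorial_zero, Nat.cast_one, one_mul] at this
        exact this
    · intro a ha
      have ha' : (a : ℕ) < k := by simpa [hs] using ha
      split_ifs with h
      · have : lam ⟨k, h⟩ ≤ lam a := hanti (by simpa [Fin.le_def] using ha'.le)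
        omega
      · omega
    · intro a ha
      have ha' : k ≤ (a : ℕ) := by simpa [hs] using ha
      have h : k < k + m := by omega
      have : lam a ≤ lam ⟨k, h⟩ := hanti (by simpa [Fin.le_def] using ha')
      rw [dif_pos h]
      omega
    · intro a b hb
      have hb' : k ≤ (b : ℕ) := by simpa [hs] using hb
      simp only [Matrix.of_apply]
      rw [if_pos hb', dividedPow, IsScalarTower.algebraMap_apply ℚ R (Polynomial R)]
      rfl
    · simp only [sub_add_cancel]
      rw [hNsum, hs, Finset.sum_filter, Fin.sum_univ_add]
      simp [(Fin.is_lt _).not_ge]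
  have hblock : (Matrix.of fun a b : Fin (k + m) =>
      if b ∈ s then (if a ∈ s then d ((lam a : ℤ) - (a : ℕ) + (b : ℕ)) else 0)
      else if a ∈ s then 0 else aeval τ (pz ((lam a : ℤ) - (a : ℕ) + (b : ℕ)))).det =
      aeval τ (schur (fun a : Fin k => pad lam a)) * MvPolynomial.C
        (Matrix.of fun i j : Fin m =>
          if (j : ℕ) ≤ v i then ((v i - j).factorial : ℚ)⁻¹ else 0).det := by
    rw [← Matrix.det_submatrix_equiv_self finSumFinEquiv, schur, AlgHom.map_det, RingHom.map_det,
      ← Matrix.det_submatrix_equiv_self (Fin.revPerm (n := m)) (RingHom.mapMatrix _ _),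
      ← Matrix.det_fromBlocks_zero₂₁ _ 0]
    congr 1
    ext1 a b
    rcases a with a | a <;> rcases b with b | b
    · simp [hs, pad, a.2.not_ge, b.2.not_ge, show (a : ℕ) < k + m by omega]
      rfl
    · simp [hs]
    · simp [hs]
    · simp [hs, hd, hv]
      congr 1
      have ha := a.2
      have hb := b.2
      split_ifs with h1 h2 h2 <;> try omega
      · congr 3
        omega
      · rfl
  rw [hcoeff, hblock, det_inv_factorial, hc, Nat.add_sub_cancel_left, hfac, htail,
    MvPolynomial.smul_eq_C_mul, div_eq_mul_inv, ← Finset.prod_inv_distrib]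
  simp only [map_mul, map_natCast]
  ring
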